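/- Let (L, I) be an integral system on a set X. If (f_n) is a sequence in L_↑ increasing pointwise to a function f : X → (−∞,∞], then f ∈ L_↑ and I_↑(f_n) → I_↑(f) in (−∞,∞]. -/

import Mathlib

open Filter Topology

/-- An integral system on a set `X`: a linear lattice `L` of real-valued functions on `X`
(a vector subspace of `ℝ^X` closed under pointwise max and min) together with a
preintegral `I` on it (a positive linear functional that is continuous in the sense that
`I fₙ → 0` whenever `fₙ ∈ L` are nonnegative and decrease pointwise to `0`). -/
structure IntegralSystem (X : Type*) where
  L : Set (X → ℝ)
  I : (X → ℝ) → ℝ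
  zero_mem : (0 : X → ℝ) ∈ L
  add_mem : ∀ ⦃f g : X → ℝ⦄, f ∈ L → g ∈ L → f + g ∈ L
  smul_mem : ∀ (c : ℝ) ⦃f : X → ℝ⦄, f ∈ L → c • f ∈ L
  sup_mem : ∀ ⦃f g : X → ℝ⦄, f ∈ L → g ∈ L → f ⊔ g ∈ L
  inf_mem : ∀ ⦃f g : X → ℝ⦄, f ∈ L → g ∈ L → f ⊓ g ∈ L
  I_add : ∀ ⦃f g : X → ℝ⦄, f ∈ L → g ∈ L → I (f + g) = I f + I g
  I_smul : ∀ (c : ℝ) ⦃f : X → ℝ⦄, f ∈ L → I (c • f) = c * I f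
  I_pos : ∀ ⦃f : X → ℝ⦄, f ∈ L → (∀ x, 0 ≤ f x) → 0 ≤ I f
  I_cont : ∀ f : ℕ → X → ℝ, (∀ n, f n ∈ L) → (∀ n x, 0 ≤ f n x) →
    (∀ n x, f (n + 1) x ≤ f n x) →
    (∀ x, Tendsto (fun n => f n x) atTop (𝓝 0)) →
    Tendsto (fun n => I (f n)) atTop (𝓝 0)

variable {X : Type*}

/-- `f : X → (−∞,∞]` belongs to `L_↑` iff some sequence in `L` increases pointwise to `f`. -/
def MemLup (S : IntegralSystem X) (f : X → EReal) : Prop :=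
  ∃ g : ℕ → X → ℝ, (∀ n, g n ∈ S.L) ∧ (∀ n x, g n x ≤ g (n + 1) x) ∧
    ∀ x, Tendsto (fun n => ((g n x : EReal))) atTop (𝓝 (f x))

/-- For `f ∈ L_↑`, `I_↑ f = lim I (g n)` for any sequence `(g n)` in `L` increasing
pointwise to `f`; the value does not depend on the chosen sequence, so we may define it as
the supremum of all such limits. -/
noncomputable def Iup (S : IntegralSystem X) (f : X → EReal) : EReal :=
  sSup { c : EReal | ∃ g : ℕ → X → ℝ, (∀ n, g n ∈ S.L) ∧ (∀ n x, g n x ≤ g (n + 1) x) ∧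
    (∀ x, Tendsto (fun n => ((g n x : EReal))) atTop (𝓝 (f x))) ∧
    Tendsto (fun n => ((S.I (g n) : EReal))) atTop (𝓝 c) }

/-- `L_↓ = −L_↑`. -/
def MemLdown (S : IntegralSystem X) (f : X → EReal) : Prop :=
  MemLup S (fun x => -(f x))

/-- `I_↓ f = −I_↑(−f)`. -/
noncomputable def Idown (S : IntegralSystem X) (f : X → EReal) : EReal :=
  -(Iup S (fun x => -(f x)))

/-- The upper integral `Ī f = inf { I_↑ g : g ∈ L_↑, f ≤ g }` (with `inf ∅ = ∞`). -/
noncomputable def upperInt (S : IntegralSystem X) (f : X → EReal) : EReal :=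
  sInf (Iup S '' { g | MemLup S g ∧ ∀ x, f x ≤ g x })

/-- The lower integral `I̲ f = sup { I_↓ g : g ∈ L_↓, g ≤ f }` (with `sup ∅ = −∞`). -/
noncomputable def lowerInt (S : IntegralSystem X) (f : X → EReal) : EReal :=
  sSup (Idown S '' { g | MemLdown S g ∧ ∀ x, g x ≤ f x })

/-- `f : X → ℝ` is `I`-integrable iff its lower and upper integrals coincide and are finite. -/
def Integrable1 (S : IntegralSystem X) (f : X → ℝ) : Prop :=
  ∃ c : ℝ, lowerInt S (fun x => ((f x : EReal))) = (c : EReal) ∧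
    upperInt S (fun x => ((f x : EReal))) = (c : EReal)

/-- The Daniell extension `I¹` of `I`: the common value of the lower and upper integrals of
an integrable function. -/
noncomputable def Int1 (S : IntegralSystem X) (f : X → ℝ) : ℝ :=
  (upperInt S (fun x => ((f x : EReal)))).toReal

/-!
Two facts carry the argument. First, if `h ∈ L` lies below the limit of an increasing sequence
`gₙ` in `L`, then `h ⊓ gₙ` increases to `h` inside `L`, so continuity of `I` gives
`I h ≤ lim I gₙ`; in particular `lim I gₙ` depends only on the limit of `gₙ`. Second, if `gₙₖ`
increases to `fₙ` in `k` and `fₙ` increases to `F`, then `hₖ = max_{n ≤ k} gₙₖ` increases to `F`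
and satisfies `hₖ ≤ fₖ ≤ F`. Hence `I hₖ ≤ I_↑ fₖ ≤ I_↑ F`, while `I hₖ → I_↑ F`.
-/

theorem tendsto_of_tendsto_of_eventually_le {ι α : Type*} [LinearOrder α]
    [TopologicalSpace α] [OrderTopology α] {l : Filter ι} [l.NeBot]
    {g : ι → ι → α} {f h : ι → α} {a : α}
    (hg : ∀ i, Tendsto (g i) l (𝓝 (f i))) (hf : Tendsto f l (𝓝 a))
    (hgh : ∀ i, ∀ᶠ k in l, g i k ≤ h k) (hhf : ∀ᶠ k in l, h k ≤ f k) :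
    Tendsto h l (𝓝 a) := by
  refine tendsto_order.2 ⟨fun b hb => ?_, fun b hb => ?_⟩
  · obtain ⟨i, hi⟩ := (hf.eventually_const_lt hb).exists
    filter_upwards [(hg i).eventually_const_lt hi, hgh i] with k hbg hle
    exact hbg.trans_le hle
  · filter_upwards [hf.eventually_lt_const hb, hhf] with k hfb hle
    exact hle.trans_lt hfb

section Diagonal

variable {ι α : Type*} [Preorder ι] [LocallyFiniteOrderBot ι] [SemilatticeSup α]

/-- The diagonal suprema of a doubly indexed family: the supremum of `g i k` over `i ≤ k`.
It merges a sequence of increasing sequences into a single one. -/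
def diagonalSups (g : ι → ι → α) (k : ι) : α :=
  partialSups (fun i => g i k) k

theorem le_diagonalSups (g : ι → ι → α) {i k : ι} (hik : i ≤ k) :
    g i k ≤ diagonalSups g k :=
  le_partialSups_of_le (fun i => g i k) hik

theorem monotone_diagonalSups {g : ι → ι → α} (hg : ∀ i, Monotone (g i)) :
    Monotone (diagonalSups g) := fun j k hjk =>
  (partialSups_mono (fun i => hg i hjk) j).trans ((partialSups fun i => g i k).monotone hjk)

theorem diagonalSups_mem {g : ι → ι → α} {s : Set α} (hs : SupClosed s)
    (hg : ∀ i k, g i k ∈ s) (k : ι) : diagonalSups g k ∈ s :=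
  Finset.sup'_mem s (fun _ ha _ hb => hs ha hb) _ Finset.nonempty_Iic _ fun i _ => hg i k

end Diagonal

namespace IntegralSystem

variable {S : IntegralSystem X}

theorem sub_mem {f g : X → ℝ} (hf : f ∈ S.L) (hg : g ∈ S.L) : f - g ∈ S.L := by
  simpa only [neg_one_smul, ← sub_eq_add_neg] using S.add_mem hf (S.smul_mem (-1) hg)

theorem I_sub {f g : X → ℝ} (hf : f ∈ S.L) (hg : g ∈ S.L) : S.I (f - g) = S.I f - S.I g := by
  rw [eq_sub_iff_add_eq, ← S.I_add (sub_mem hf hg) hg, sub_add_cancel]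

theorem I_mono {f g : X → ℝ} (hf : f ∈ S.L) (hg : g ∈ S.L) (hfg : f ≤ g) : S.I f ≤ S.I g := by
  rw [← sub_nonneg, ← I_sub hg hf]
  exact S.I_pos (sub_mem hg hf) fun x => sub_nonneg.2 (hfg x)

theorem tendsto_I_of_monotone {g : ℕ → X → ℝ} {h : X → ℝ} (hg : ∀ n, g n ∈ S.L)
    (hh : h ∈ S.L) (hmono : Monotone g) (hlim : ∀ x, Tendsto (fun n => g n x) atTop (𝓝 (h x))) :
    Tendsto (fun n => S.I (g n)) atTop (𝓝 (S.I h)) := by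
  have hle (n : ℕ) (x : X) : g n x ≤ h x :=
    Monotone.ge_of_tendsto (fun _ _ hij => hmono hij x) (hlim x) n
  have hdiff : Tendsto (fun n => S.I (h - g n)) atTop (𝓝 0) :=
    S.I_cont (fun n => h - g n) (fun n => sub_mem hh (hg n))
      (fun n x => sub_nonneg.2 (hle n x))
      (fun n x => sub_le_sub_left (hmono n.le_succ x) (h x))
      (fun x => by simpa only [Pi.sub_apply, sub_self] using (hlim x).const_sub (h x))
  simpa only [I_sub hh (hg _), sub_sub_cancel, sub_zero] using hdiff.const_sub (S.I h)

/-- `S.IncreasesTo g f` says that `g` is a sequence in `L` increasing pointwise to the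
extended-real function `f`, i.e. that `g` witnesses `f ∈ L_↑`. -/
structure IncreasesTo (S : IntegralSystem X) (g : ℕ → X → ℝ) (f : X → EReal) : Prop where
  mem : ∀ n, g n ∈ S.L
  monotone : Monotone g
  tendsto : ∀ x, Tendsto (fun n => (g n x : EReal)) atTop (𝓝 (f x))

theorem memLup_iff_exists_increasesTo {f : X → EReal} :
    MemLup S f ↔ ∃ g, S.IncreasesTo g f :=
  ⟨fun ⟨g, hmem, hmono, hlim⟩ => ⟨g, hmem, monotone_nat_of_le_succ hmono, hlim⟩,
    fun ⟨g, hg⟩ => ⟨g, hg.mem, fun n => hg.monotone n.le_succ, hg.tendsto⟩⟩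

namespace IncreasesTo

variable {g : ℕ → X → ℝ} {f : X → EReal} {h : X → ℝ}

theorem coe_le (hg : S.IncreasesTo g f) (n : ℕ) (x : X) : (g n x : EReal) ≤ f x :=
  Monotone.ge_of_tendsto (fun _ _ hij => EReal.coe_le_coe (hg.monotone hij x)) (hg.tendsto x) n

theorem tendsto_inf (hg : S.IncreasesTo g f) (hle : ∀ x, (h x : EReal) ≤ f x) (x : X) :
    Tendsto (fun n => (h ⊓ g n) x) atTop (𝓝 (h x)) := by
  rw [← EReal.tendsto_coe]
  have hmin := (tendsto_const_nhds (x := (h x : EReal))).min (hg.tendsto x)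
  rw [min_eq_left (hle x)] at hmin
  exact hmin.congr fun n => (EReal.coe_strictMono.monotone.map_min).symm

theorem I_le_of_tendsto (hg : S.IncreasesTo g f) {c : EReal}
    (hc : Tendsto (fun n => (S.I (g n) : EReal)) atTop (𝓝 c)) (hh : h ∈ S.L)
    (hle : ∀ x, (h x : EReal) ≤ f x) : (S.I h : EReal) ≤ c := by
  have hmem (n : ℕ) : h ⊓ g n ∈ S.L := S.inf_mem hh (hg.mem n)
  have hlim : Tendsto (fun n => S.I (h ⊓ g n)) atTop (𝓝 (S.I h)) :=
    tendsto_I_of_monotone hmem hh (fun _ _ hij => inf_le_inf_left h (hg.monotone hij))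
      (hg.tendsto_inf hle)
  exact le_of_tendsto_of_tendsto' (EReal.tendsto_coe.2 hlim) hc fun n =>
    EReal.coe_le_coe (I_mono (hmem n) (hg.mem n) inf_le_right)

theorem tendsto_I (hg : S.IncreasesTo g f) :
    Tendsto (fun n => (S.I (g n) : EReal)) atTop (𝓝 (Iup S f)) := by
  have hsup : Tendsto (fun n => (S.I (g n) : EReal)) atTop (𝓝 (⨆ n, (S.I (g n) : EReal))) :=
    tendsto_atTop_iSup fun i j hij =>
      EReal.coe_le_coe (I_mono (hg.mem i) (hg.mem j) (hg.monotone hij))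
  suffices Iup S f = ⨆ n, (S.I (g n) : EReal) by rwa [this]
  refine le_antisymm (sSup_le ?_)
    (le_sSup ⟨g, hg.mem, fun n => hg.monotone n.le_succ, hg.tendsto, hsup⟩)
  rintro c ⟨k, hmem, hmono, hlim, hc⟩
  have hk : S.IncreasesTo k f := ⟨hmem, monotone_nat_of_le_succ hmono, hlim⟩
  exact le_of_tendsto' hc fun n => hg.I_le_of_tendsto hsup (hmem n) (hk.coe_le n)

end IncreasesTo

theorem I_le_Iup {f : X → EReal} {h : X → ℝ} (hf : MemLup S f) (hh : h ∈ S.L)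
    (hle : ∀ x, (h x : EReal) ≤ f x) : (S.I h : EReal) ≤ Iup S f := by
  obtain ⟨g, hg⟩ := memLup_iff_exists_increasesTo.1 hf
  exact hg.I_le_of_tendsto hg.tendsto_I hh hle

theorem Iup_mono {f₁ f₂ : X → EReal} (hf₁ : MemLup S f₁) (hf₂ : MemLup S f₂) (hle : f₁ ≤ f₂) :
    Iup S f₁ ≤ Iup S f₂ := by
  obtain ⟨g, hg⟩ := memLup_iff_exists_increasesTo.1 hf₁
  exact le_of_tendsto' hg.tendsto_I fun n =>
    I_le_Iup hf₂ (hg.mem n) fun x => (hg.coe_le n x).trans (hle x)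

variable {g : ℕ → ℕ → X → ℝ} {f : ℕ → X → EReal} {F : X → EReal}

theorem coe_diagonalSups_le (hg : ∀ n, S.IncreasesTo (g n) (f n)) (hf : Monotone f)
    (k : ℕ) (x : X) : (diagonalSups g k x : EReal) ≤ f k x := by
  have hsup {u v : X → ℝ} : ((u ⊔ v) x : EReal) ≤ f k x ↔ (u x : EReal) ≤ f k x ∧
      (v x : EReal) ≤ f k x := by
    rw [Pi.sup_apply, EReal.coe_strictMono.monotone.map_sup, sup_le_iff]
  exact (partialSups_iff_forall (fun u : X → ℝ => (u x : EReal) ≤ f k x) hsup).2 fun n hn =>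
    ((hg n).coe_le k x).trans (hf hn x)

theorem increasesTo_diagonalSups (hg : ∀ n, S.IncreasesTo (g n) (f n)) (hf : Monotone f)
    (hlim : ∀ x, Tendsto (fun n => f n x) atTop (𝓝 (F x))) :
    S.IncreasesTo (diagonalSups g) F where
  mem := diagonalSups_mem (fun _ hu _ hv => S.sup_mem hu hv) fun n => (hg n).mem
  monotone := monotone_diagonalSups fun n => (hg n).monotone
  tendsto x := tendsto_of_tendsto_of_eventually_le (fun n => (hg n).tendsto x) (hlim x)
    (fun n => (eventually_ge_atTop n).mono fun _ hk => EReal.coe_le_coe (le_diagonalSups g hk x))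
    (Eventually.of_forall fun k => coe_diagonalSups_le hg hf k x)

end IntegralSystem

/-- If a sequence `(f n)` in `L_↑` increases pointwise to `F : X → (−∞,∞]`, then
`F ∈ L_↑` and `I_↑ (f n) → I_↑ F` in `(−∞,∞]`. -/
theorem memLup_of_increasing_limit (S : IntegralSystem X) (f : ℕ → X → EReal) (F : X → EReal)
    (hf : ∀ n, MemLup S (f n))
    (hmono : ∀ n x, f n x ≤ f (n + 1) x)
    (hlim : ∀ x, Tendsto (fun n => f n x) atTop (𝓝 (F x))) :
    MemLup S F ∧ Tendsto (fun n => Iup S (f n)) atTop (𝓝 (Iup S F)) := by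
  choose g hg using fun n => IntegralSystem.memLup_iff_exists_increasesTo.1 (hf n)
  have hfmono : Monotone f := monotone_nat_of_le_succ hmono
  have hdiag : S.IncreasesTo (diagonalSups g) F :=
    IntegralSystem.increasesTo_diagonalSups hg hfmono hlim
  have hF : MemLup S F := IntegralSystem.memLup_iff_exists_increasesTo.2 ⟨_, hdiag⟩
  have hfF (n : ℕ) : f n ≤ F := hfmono.ge_of_tendsto (tendsto_pi_nhds.2 hlim) n
  have hlower (k : ℕ) : (S.I (diagonalSups g k) : EReal) ≤ Iup S (f k) :=
    IntegralSystem.I_le_Iup (hf k) (hdiag.mem k) (IntegralSystem.coe_diagonalSups_le hg hfmono k)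
  have hupper (k : ℕ) : Iup S (f k) ≤ Iup S F := IntegralSystem.Iup_mono (hf k) hF (hfF k)
  exact ⟨hF, tendsto_of_tendsto_of_tendsto_of_le_of_le hdiag.tendsto_I tendsto_const_nhds
    hlower hupper⟩
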